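/- arXiv:1110.0807 — 2 statements merged into one kernel-verified Lean document; each statement's English description precedes it below -/
import Mathlib

section
/- Let (X_i) and (Y_i) be sequences of real-valued random variables such that for every p ∈ ℕ, sup_i E[|X_i|^p] < ∞ and sup_i E[|Y_i|^p] < ∞, such that all moments lim_i E[X_i^j] and lim_i E[Y_i^k] exist, and such that X_i and Y_i are weakly asymptotically independent. Then X_i and Y_i are asymptotically independent in moment: for all j, k ∈ ℕ, lim_i E[X_i^j Y_i^k] exists and equals (lim_i E[X_i^j])·(lim_i E[Y_i^k]). -/
open Filter MeasureTheory

lemma aux_A (F : ℕ → ℕ → ℝ) (G L : ℕ → ℝ) (l C : ℝ)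
    (h : ∀ n i, |F n i - G i| ≤ C * (1 / ((n : ℝ) + 1)))
    (hF : ∀ n, Tendsto (F n) atTop (nhds (L n))) (hL : Tendsto L atTop (nhds l)) :
    Tendsto G atTop (nhds l) := by
  have h0 : Tendsto (fun n : ℕ => C * (1 / ((n : ℝ) + 1))) atTop (nhds 0) := by
    simpa using (tendsto_one_div_add_atTop_nhds_zero_nat (𝕜 := ℝ)).const_mul C
  rw [Metric.tendsto_atTop]
  intro ε hε
  have e1 := h0.eventually (gt_mem_nhds (show (0 : ℝ) < ε / 3 by positivity))
  have e2 := hL.eventually (Metric.ball_mem_nhds l (show (0 : ℝ) < ε / 3 by positivity))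
  obtain ⟨n, hn1, hn2⟩ := (e1.and e2).exists
  obtain ⟨N, hN⟩ := (Metric.tendsto_atTop.1 (hF n)) (ε / 3) (by positivity)
  refine ⟨N, fun i hi => ?_⟩
  have a := hN i hi
  have b := h n i
  rw [Real.dist_eq, abs_lt] at hn2 a ⊢
  rw [abs_le] at b
  constructor <;> linarith [a.1, a.2, b.1, b.2, hn2.1, hn2.2]

lemma aux_B (F : ℕ → ℕ → ℝ) (G L : ℕ → ℝ) (l C : ℝ)
    (h : ∀ n i, |F n i - G i| ≤ C * (1 / ((n : ℝ) + 1)))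
    (hF : ∀ n, Tendsto (F n) atTop (nhds (L n))) (hG : Tendsto G atTop (nhds l)) :
    Tendsto L atTop (nhds l) := by
  have h0 : Tendsto (fun n : ℕ => C * (1 / ((n : ℝ) + 1))) atTop (nhds 0) := by
    simpa using (tendsto_one_div_add_atTop_nhds_zero_nat (𝕜 := ℝ)).const_mul C
  rw [tendsto_iff_norm_sub_tendsto_zero]
  refine squeeze_zero (fun _ => norm_nonneg _) (fun n => ?_) h0
  exact le_of_tendsto ((hF n).sub hG).abs (Eventually.of_forall (h n))

/-- truncation -/
noncomputable def trunc (n : ℕ) (x : ℝ) : ℝ := max (-((n : ℝ) + 1)) (min ((n : ℝ) + 1) x)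

lemma trunc_cont (n : ℕ) : Continuous (trunc n) := by unfold trunc; fun_prop

lemma trunc_bdd (n : ℕ) (x : ℝ) : |trunc n x| ≤ (n : ℝ) + 1 := by
  have : (0 : ℝ) ≤ n := n.cast_nonneg
  unfold trunc
  rw [abs_le]
  exact ⟨le_max_left _ _, max_le (by linarith) (min_le_left _ _)⟩

lemma trunc_of_le (n : ℕ) (x : ℝ) (h : |x| ≤ (n : ℝ) + 1) : trunc n x = x := by
  rw [abs_le] at h
  unfold trunc
  rw [min_eq_right h.2, max_eq_right h.1]

lemma trunc_abs_le (n : ℕ) (x : ℝ) : |trunc n x| ≤ |x| := by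
  by_cases h : |x| ≤ (n : ℝ) + 1
  · rw [trunc_of_le n x h]
  · exact (trunc_bdd n x).trans (not_le.1 h).le

lemma trunc_err (n j : ℕ) (x : ℝ) :
    |trunc n x ^ j - x ^ j| ≤ 2 * |x| ^ (j + 1) * (1 / ((n : ℝ) + 1)) := by
  have hn : (0 : ℝ) < (n : ℝ) + 1 := by positivity
  by_cases h : |x| ≤ (n : ℝ) + 1
  · rw [trunc_of_le n x h]; simp; positivity
  · push Not at h
    have h1 : |trunc n x ^ j - x ^ j| ≤ |x| ^ j + |x| ^ j := by
      refine (abs_sub _ _).trans ?_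
      rw [abs_pow, abs_pow]
      exact add_le_add (pow_le_pow_left₀ (abs_nonneg _) (trunc_abs_le n x) j) le_rfl
    rw [mul_one_div, le_div_iff₀ hn]
    calc _ ≤ (|x| ^ j + |x| ^ j) * |x| := by gcongr
      _ = _ := by ring

lemma two_mul_pow_le (a b : ℝ) (p q : ℕ) (ha : 0 ≤ a) (hb : 0 ≤ b) :
    a ^ p * b ^ q ≤ a ^ (2 * p) + b ^ (2 * q) := by
  rw [mul_comm 2 p, mul_comm 2 q, pow_mul, pow_mul]
  nlinarith [sq_nonneg (a ^ p - b ^ q), sq_nonneg (a ^ p), sq_nonneg (b ^ q)]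

lemma trunc_err2 (n j k : ℕ) (x y : ℝ) :
    |trunc n x ^ j * trunc n y ^ k - x ^ j * y ^ k| ≤
      2 * (|x| ^ (2 * (j + 1)) + |y| ^ (2 * k) + (|x| ^ (2 * j) + |y| ^ (2 * (k + 1))))
        * (1 / ((n : ℝ) + 1)) := by
  have e : trunc n x ^ j * trunc n y ^ k - x ^ j * y ^ k =
    (trunc n x ^ j - x ^ j) * trunc n y ^ k + x ^ j * (trunc n y ^ k - y ^ k) := by ring
  have h1 := trunc_err n j x
  have h2 := trunc_err n k y
  have h3 : |trunc n y| ^ k ≤ |y| ^ k := pow_le_pow_left₀ (abs_nonneg _) (trunc_abs_le n y) k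
  have h4 := two_mul_pow_le |x| |y| (j + 1) k (abs_nonneg _) (abs_nonneg _)
  have h5 := two_mul_pow_le |x| |y| j (k + 1) (abs_nonneg _) (abs_nonneg _)
  rw [e]
  refine (abs_add_le _ _).trans ?_
  rw [abs_mul, abs_mul, abs_pow (trunc n y), abs_pow x]
  calc _ ≤ (2 * |x| ^ (j + 1) * (1 / ((n : ℝ) + 1))) * |y| ^ k
        + |x| ^ j * (2 * |y| ^ (k + 1) * (1 / ((n : ℝ) + 1))) := by gcongr
    _ = 2 * (|x| ^ (j + 1) * |y| ^ k + |x| ^ j * |y| ^ (k + 1)) * (1 / ((n : ℝ) + 1)) := by ring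
    _ ≤ _ := by gcongr

lemma int_err {Ω : Type} [MeasurableSpace Ω] (μ : Measure Ω) (f g B : Ω → ℝ) (c M : ℝ)
    (hc : 0 ≤ c) (hf : Integrable f μ) (hg : Integrable g μ) (hB : Integrable B μ)
    (h : ∀ ω, |f ω - g ω| ≤ B ω * c) (hM : ∫ ω, B ω ∂μ ≤ M) :
    |∫ ω, f ω ∂μ - ∫ ω, g ω ∂μ| ≤ M * c := by
  rw [← integral_sub hf hg]
  refine (abs_integral_le_integral_abs).trans ?_
  refine (integral_mono (hf.sub hg).abs (hB.mul_const c) h).trans ?_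
  rw [integral_mul_const]
  gcongr



/-- If `(X_i)` and `(Y_i)` have all moments uniformly bounded, all individual moments
converge, and they are weakly asymptotically independent (the expectations of bounded
continuous test functions and their products converge multiplicatively), then they are
asymptotically independent in moment. -/
theorem asymptotically_independent_in_moment_of_weak
    (Ω : ℕ → Type) [∀ i, MeasurableSpace (Ω i)]
    (μ : ∀ i, Measure (Ω i)) [∀ i, IsProbabilityMeasure (μ i)]
    (X Y : ∀ i, Ω i → ℝ)
    (hXmeas : ∀ i, Measurable (X i)) (hYmeas : ∀ i, Measurable (Y i))
    -- all moments exist (integrability of all powers)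
    (hXint : ∀ i, ∀ p : ℕ, Integrable (fun ω => |X i ω| ^ p) (μ i))
    (hYint : ∀ i, ∀ p : ℕ, Integrable (fun ω => |Y i ω| ^ p) (μ i))
    -- uniformly bounded moments
    (hXbdd : ∀ p : ℕ, ∃ M : ℝ, ∀ i, (∫ ω, |X i ω| ^ p ∂(μ i)) ≤ M)
    (hYbdd : ∀ p : ℕ, ∃ M : ℝ, ∀ i, (∫ ω, |Y i ω| ^ p ∂(μ i)) ≤ M)
    -- the limits of the individual moments exist
    (Lx Ly : ℕ → ℝ)
    (hLx : ∀ j : ℕ, Tendsto (fun i => ∫ ω, (X i ω) ^ j ∂(μ i)) atTop (nhds (Lx j)))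
    (hLy : ∀ k : ℕ, Tendsto (fun i => ∫ ω, (Y i ω) ^ k ∂(μ i)) atTop (nhds (Ly k)))
    -- weak asymptotic independence
    (hweak : ∀ f g : ℝ → ℝ, Continuous f → Continuous g →
      (∃ Cf : ℝ, ∀ x, |f x| ≤ Cf) → (∃ Cg : ℝ, ∀ x, |g x| ≤ Cg) →
      ∃ Lf Lg Lfg : ℝ,
        Tendsto (fun i => ∫ ω, f (X i ω) ∂(μ i)) atTop (nhds Lf) ∧
        Tendsto (fun i => ∫ ω, g (Y i ω) ∂(μ i)) atTop (nhds Lg) ∧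
        Tendsto (fun i => ∫ ω, f (X i ω) * g (Y i ω) ∂(μ i)) atTop (nhds Lfg) ∧
        Lfg = Lf * Lg) :
    ∀ j k : ℕ,
      Tendsto (fun i => ∫ ω, (X i ω) ^ j * (Y i ω) ^ k ∂(μ i)) atTop
        (nhds (Lx j * Ly k)) := by
  intro j k
  have hTm : ∀ n, Measurable (trunc n) := fun n => (trunc_cont n).measurable
  have hb : ∀ n p, ∃ C : ℝ, ∀ x, |trunc n x ^ p| ≤ C := fun n p =>
    ⟨((n : ℝ) + 1) ^ p, fun x => by
      rw [abs_pow]; exact pow_le_pow_left₀ (abs_nonneg _) (trunc_bdd n x) p⟩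
  choose Lf Lg Lfg h1 h2 h3 h4 using fun n : ℕ =>
    hweak (fun x => trunc n x ^ j) (fun x => trunc n x ^ k)
      ((trunc_cont n).pow j) ((trunc_cont n).pow k) (hb n j) (hb n k)
  have hTint : ∀ (n p i : ℕ) (Z : Ω i → ℝ), Measurable Z →
      Integrable (fun ω => trunc n (Z ω) ^ p) (μ i) := by
    intro n p i Z hZ
    obtain ⟨C, hC⟩ := hb n p
    exact Integrable.of_bound (((hTm n).comp hZ).pow_const p).aestronglyMeasurable C
      (Eventually.of_forall fun ω => hC _)
  have hpow : ∀ (p i : ℕ) (Z : Ω i → ℝ), Measurable Z →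
      Integrable (fun ω => |Z ω| ^ p) (μ i) → Integrable (fun ω => Z ω ^ p) (μ i) := by
    intro p i Z hZ h
    exact h.mono' (hZ.pow_const p).aestronglyMeasurable
      (Eventually.of_forall fun ω => by simp)
  have key : ∀ (Z : ∀ i, Ω i → ℝ), (∀ i, Measurable (Z i)) →
      (∀ i, ∀ p : ℕ, Integrable (fun ω => |Z i ω| ^ p) (μ i)) →
      (∀ p : ℕ, ∃ M : ℝ, ∀ i, (∫ ω, |Z i ω| ^ p ∂(μ i)) ≤ M) → ∀ p : ℕ,
      ∃ C : ℝ, ∀ n i : ℕ, |∫ ω, trunc n (Z i ω) ^ p ∂(μ i) - ∫ ω, Z i ω ^ p ∂(μ i)|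
        ≤ C * (1 / ((n : ℝ) + 1)) := by
    intro Z hZ hi hbd p
    obtain ⟨M, hM⟩ := hbd (p + 1)
    refine ⟨2 * M, fun n i => int_err (μ i) _ _ (fun ω => 2 * |Z i ω| ^ (p + 1)) _ _
      (by positivity) (hTint n p i _ (hZ i)) (hpow p i _ (hZ i) (hi i p))
      ((hi i (p + 1)).const_mul 2) (fun ω => trunc_err n p _) ?_⟩
    rw [integral_const_mul]
    linarith [hM i]
  obtain ⟨Cx, hCx⟩ := key X hXmeas hXint hXbdd j
  obtain ⟨Cy, hCy⟩ := key Y hYmeas hYint hYbdd k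
  have l1 := aux_B _ _ _ _ _ hCx h1 (hLx j)
  have l2 := aux_B _ _ _ _ _ hCy h2 (hLy k)
  have l3 : Tendsto Lfg atTop (nhds (Lx j * Ly k)) := by
    rw [show Lfg = fun n => Lf n * Lg n from funext h4]
    exact l1.mul l2
  obtain ⟨M1, hM1⟩ := hXbdd (2 * (j + 1))
  obtain ⟨M2, hM2⟩ := hYbdd (2 * k)
  obtain ⟨M3, hM3⟩ := hXbdd (2 * j)
  obtain ⟨M4, hM4⟩ := hYbdd (2 * (k + 1))
  refine aux_A _ _ _ _ (2 * (M1 + M2 + (M3 + M4))) (fun n i => ?_) h3 l3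
  have i12 := (hXint i (2 * (j + 1))).add (hYint i (2 * k))
  have i34 := (hXint i (2 * j)).add (hYint i (2 * (k + 1)))
  refine int_err (μ i) _ _ (fun ω => 2 * (|X i ω| ^ (2 * (j + 1)) + |Y i ω| ^ (2 * k) +
    (|X i ω| ^ (2 * j) + |Y i ω| ^ (2 * (k + 1))))) _ _ (by positivity) ?_ ?_
    ((i12.add i34).const_mul 2) (fun ω => trunc_err2 n j k _ _) ?_
  · obtain ⟨C, hC⟩ := hb n j
    exact (hTint n k i _ (hYmeas i)).bdd_mul (c := C)
      (hTint n j i _ (hXmeas i)).aestronglyMeasurable (Eventually.of_forall fun ω => hC _)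
  · refine ((hXint i (2 * j)).add (hYint i (2 * k))).mono'
      (((hXmeas i).pow_const j).mul ((hYmeas i).pow_const k)).aestronglyMeasurable
      (Eventually.of_forall fun ω => ?_)
    rw [Real.norm_eq_abs, abs_mul, abs_pow, abs_pow]
    exact two_mul_pow_le _ _ j k (abs_nonneg _) (abs_nonneg _)
  · rw [integral_const_mul]
    have e1 := integral_add i12 i34
    have e2 := integral_add (hXint i (2 * (j + 1))) (hYint i (2 * k))
    have e3 := integral_add (hXint i (2 * j)) (hYint i (2 * (k + 1)))
    simp only [Pi.add_apply] at e1 e2 e3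
    rw [e1, e2, e3]
    linarith [hM1 i, hM2 i, hM3 i, hM4 i]
end

section
/- Fix 1 ≤ q < ∞ and 0 < ε < 1/6, and for each n let λ^n be a partition of n whose number of parts satisfies n(λ^n) ≤ n^ε. Then for every continuous function f : ℝ → ℝ of polynomial growth, E_n[f(ρ̄_q(σ)) | λ(σ) = λ^n] − E_n[f(ρ̄_q(σ))] → 0 as n → ∞, where the conditional expectation is the average of f(ρ̄_q) over the uniform measure on S_n^{λ^n}. -/
open scoped BigOperators Classical
open Finset Filter

/-- Expectation under the uniform measure on `S_n`. -/
noncomputable def En {n : ℕ} (g : Equiv.Perm (Fin n) → ℝ) : ℝ :=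
  (∑ σ : Equiv.Perm (Fin n), g σ) / (Fintype.card (Equiv.Perm (Fin n)) : ℝ)

/-- Variance under the uniform measure on `S_n`. -/
noncomputable def VarN {n : ℕ} (g : Equiv.Perm (Fin n) → ℝ) : ℝ :=
  En (fun σ => (g σ - En g) ^ 2)

/-- Spearman's metric `ρ_q(σ) = Σ_i |σ(i) − i|^q`. -/
noncomputable def rhoq (q : ℝ) {n : ℕ} (σ : Equiv.Perm (Fin n)) : ℝ :=
  ∑ i : Fin n, |((σ i : ℕ) : ℝ) - ((i : ℕ) : ℝ)| ^ q

/-- Normalized Spearman's metric `ρ̄_q = (ρ_q − E ρ_q)/√(Var ρ_q)`. -/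
noncomputable def rhoqBar (q : ℝ) {n : ℕ} (σ : Equiv.Perm (Fin n)) : ℝ :=
  (rhoq q σ - En (rhoq q (n := n))) / Real.sqrt (VarN (rhoq q (n := n)))

/-- Conditional expectation given cycle type `λ`: the average over `S_n^λ`. -/
noncomputable def EnCond {n : ℕ} (lam : (Fintype.card (Fin n)).Partition)
    (g : Equiv.Perm (Fin n) → ℝ) : ℝ :=
  (∑ σ ∈ Finset.univ.filter (fun σ : Equiv.Perm (Fin n) => σ.partition = lam), g σ) /
    ((Finset.univ.filter (fun σ : Equiv.Perm (Fin n) => σ.partition = lam)).card : ℝ)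


section Combi

def FullCyc {α : Type*} (c : Equiv.Perm α) : Prop := ∀ x y, c.SameCycle x y

theorem sameCycle_rel {α : Type*} [Finite α] {e : Equiv.Perm α} {R : α → α → Prop}
    (hr : ∀ x, R x x) (ht : ∀ x y z, R x y → R y z → R x z)
    (h : ∀ x, R x (e x)) {x y : α} (hxy : e.SameCycle x y) : R x y := by
  obtain ⟨k, -, rfl⟩ := hxy.exists_pow_eq'
  clear hxy
  induction k with
  | zero => exact hr _
  | succ k ih =>
    refine ht _ _ _ ih ?_
    rw [pow_succ', Equiv.Perm.mul_apply]
    exact h _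

theorem fullCyc_conj {α : Type*} [Fintype α] [DecidableEq α] {c d : Equiv.Perm α}
    (hc : FullCyc c) (hd : FullCyc d) : IsConj c d := by
  rcases subsingleton_or_nontrivial α with h | h
  · rw [Subsingleton.elim c d]
  · have key : ∀ c : Equiv.Perm α, FullCyc c → c.IsCycle ∧ c.support = Finset.univ := by
      intro c hc
      have hne : ∀ x, c x ≠ x := by
        intro x hx
        obtain ⟨y, hy⟩ := exists_ne x
        exact hy (((hc x y).eq_of_left hx).symm)
      constructor
      · obtain ⟨x⟩ := (inferInstance : Nonempty α)
        exact ⟨x, hne x, fun y _ => hc x y⟩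
      · ext x; simp [hne x]
    refine (key c hc).1.isConj (key d hd).1 ?_
    rw [(key c hc).2, (key d hd).2]

theorem ham_mul_left {α : Type*} [Fintype α] [DecidableEq α] (s u v : Equiv.Perm α) :
    hammingDist ⇑(s * u) ⇑(s * v) = hammingDist ⇑u ⇑v := by
  simp [hammingDist]

theorem ham_mul_right {α : Type*} [Fintype α] [DecidableEq α] (s u v : Equiv.Perm α) :
    hammingDist ⇑(u * s) ⇑(v * s) = hammingDist ⇑u ⇑v := by
  unfold hammingDist
  refine Finset.card_bij (fun i _ => s i) ?_ ?_ ?_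
  · intro a ha
    exact Finset.mem_filter.2 ⟨Finset.mem_univ _, (Finset.mem_filter.1 ha).2⟩
  · intro a _ b _ h; exact s.injective h
  · intro b hb
    refine ⟨s⁻¹ b, Finset.mem_filter.2 ⟨Finset.mem_univ _, ?_⟩, by simp⟩
    have := (Finset.mem_filter.1 hb).2
    simpa using this

theorem ham_supp {α : Type*} [Fintype α] [DecidableEq α] (s u : Equiv.Perm α) :
    hammingDist ⇑(s * u) ⇑u = s.support.card := by
  have : hammingDist ⇑(s * u) ⇑(1 * u) = s.support.card := by
    rw [ham_mul_right]
    unfold hammingDist Equiv.Perm.support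
    congr 1
  simpa using this

theorem ham_swap {α : Type*} [Fintype α] [DecidableEq α] (i j : α) (u : Equiv.Perm α) :
    hammingDist ⇑(Equiv.swap i j * u) ⇑u ≤ 2 := by
  rw [ham_supp]
  by_cases h : i = j
  · subst h; simp
  · rw [Equiv.Perm.card_support_swap h]

theorem ham_swap_right {α : Type*} [Fintype α] [DecidableEq α] (i j : α) (u : Equiv.Perm α) :
    hammingDist ⇑(u * Equiv.swap i j) ⇑u ≤ 2 := by
  rw [Equiv.mul_swap_eq_swap_mul]
  exact ham_swap _ _ _

theorem exists_fullCyc_near {α : Type*} [Fintype α] [DecidableEq α] (σ : Equiv.Perm α) :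
    ∃ c : Equiv.Perm α, FullCyc c ∧ hammingDist ⇑c ⇑σ ≤ σ.partition.parts.card := by
  classical
  let S := Equiv.Perm.SameCycle.setoid σ
  let rep : α → α := fun x => (Quotient.mk S x).out
  have hrep : ∀ x, σ.SameCycle (rep x) x := fun x => Quotient.mk_out (s := S) x
  have hrep2 : ∀ x y, σ.SameCycle x y → rep x = rep y := by
    intro x y h
    have : Quotient.mk S x = Quotient.mk S y := Quotient.sound h
    simp only [rep, this]
  let Reps : Finset α := Finset.univ.image rep
  have hReps : ∀ x ∈ Reps, rep x = x := by
    intro x hx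
    obtain ⟨y, -, rfl⟩ := Finset.mem_image.1 hx
    exact hrep2 _ _ (hrep y)
  have hRm : ∀ x, rep x ∈ Reps := fun x => Finset.mem_image_of_mem _ (Finset.mem_univ _)
  obtain ⟨p, hp, hps⟩ := Reps.exists_cycleOn
  refine ⟨p * σ, ?_, ?_⟩
  · have h1 : ∀ x, (p * σ).SameCycle (rep x) x := by
      intro x
      obtain ⟨k, -, hk⟩ := (hrep x).exists_pow_eq'
      have : ∀ k : ℕ, (p * σ).SameCycle (rep x) ((σ ^ k) (rep x)) := by
        intro k
        induction k with
        | zero => exact Equiv.Perm.SameCycle.refl _ _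
        | succ k ih =>
          by_cases hm : (σ ^ (k+1)) (rep x) ∈ Reps
          · have e1 : rep ((σ ^ (k+1)) (rep x)) = rep x := by
              apply hrep2
              have : σ.SameCycle ((σ ^ (k+1)) (rep x)) (rep x) :=
                (Equiv.Perm.sameCycle_pow_left).2 (Equiv.Perm.SameCycle.refl _ _)
              exact this.trans (hrep x)
            rw [hReps _ hm] at e1
            rw [e1]
          · refine ih.trans ?_
            have e2 : (p * σ) ((σ ^ k) (rep x)) = (σ ^ (k+1)) (rep x) := by
              rw [Equiv.Perm.mul_apply, pow_succ', Equiv.Perm.mul_apply]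
              have : σ ((σ ^ k) (rep x)) ∉ p.support := by
                intro h; apply hm
                rw [pow_succ', Equiv.Perm.mul_apply]
                exact hps h
              simpa using this
            rw [← e2]
            exact (Equiv.Perm.sameCycle_apply_right).2 (Equiv.Perm.SameCycle.refl _ _)
      rw [← hk]
      have := this k
      rwa [hk] at this ⊢
    have h2 : ∀ r ∈ Reps, (p * σ).SameCycle r (p r) := by
      intro r hr
      have a := h1 (σ⁻¹ r)
      have b : rep (σ⁻¹ r) = r := by
        rw [hrep2 (σ⁻¹ r) r (Equiv.Perm.sameCycle_inv.1 ((Equiv.Perm.sameCycle_apply_left).2 (Equiv.Perm.SameCycle.refl _ _))), hReps r hr]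
      rw [b] at a
      have c : (p * σ) (σ⁻¹ r) = p r := by simp
      rw [← c]
      exact a.trans ((Equiv.Perm.sameCycle_apply_right).2 (Equiv.Perm.SameCycle.refl _ _))
    have h3 : ∀ x, (p * σ).SameCycle x (p x) := by
      intro x
      by_cases hx : x ∈ Reps
      · exact h2 x hx
      · have : p x = x := by
          by_contra h
          exact hx (hps (by simpa using h))
        rw [this]
    have h4 : ∀ x y, p.SameCycle x y → (p * σ).SameCycle x y := fun x y h =>
      sameCycle_rel (R := (p * σ).SameCycle) (fun _ => Equiv.Perm.SameCycle.refl _ _)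
        (fun _ _ _ a b => a.trans b) h3 h
    intro x y
    refine ((h1 x).symm.trans ?_).trans (h1 y)
    exact h4 _ _ (hp.2 (hRm x) (hRm y))
  · rw [ham_supp]
    refine (Finset.card_le_card hps).trans ?_
    rw [Equiv.Perm.parts_partition, Multiset.card_add, Multiset.card_replicate,
      Equiv.Perm.cycleType_def, Multiset.card_map]
    change _ ≤ σ.cycleFactorsFinset.card + _
    rw [← Finset.card_compl, ← Finset.card_filter_add_card_filter_not (s := Reps) (fun x => x ∈ σ.support)]
    refine Nat.add_le_add ?_ ?_
    · refine Finset.card_le_card_of_injOn (fun x => σ.cycleOf x) ?_ ?_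
      · intro x hx
        simp only [Finset.coe_filter, Set.mem_ofPred_eq] at hx
        exact Equiv.Perm.cycleOf_mem_cycleFactorsFinset_iff.2 hx.2
      · intro x hx y hy hxy
        simp only [Finset.coe_filter, Set.mem_ofPred_eq] at hx hy
        have : σ.SameCycle x y := by
          have h : y ∈ (σ.cycleOf x).support := by
            simp only at hxy
            rw [hxy, Equiv.Perm.mem_support_cycleOf_iff]
            exact ⟨Equiv.Perm.SameCycle.refl _ _, hy.2⟩
          rw [Equiv.Perm.mem_support_cycleOf_iff] at h
          exact h.1
        rw [← hReps x hx.1, ← hReps y hy.1]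
        exact hrep2 _ _ this
    · apply Finset.card_le_card
      intro x hx
      simp only [Finset.mem_filter] at hx
      simpa using hx.2

theorem dec_mul {n : ℕ} (p : Fin (n+1)) (e : Equiv.Perm (Fin n)) :
    Equiv.Perm.decomposeFin.symm (p, e) = Equiv.swap 0 p * Equiv.Perm.decomposeFin.symm (0, e) := by
  ext i
  refine Fin.cases ?_ (fun i => ?_) i
  · simp
  · simp

theorem dec_swap {n : ℕ} (p : Fin (n+1)) (e : Equiv.Perm (Fin n)) (i j : Fin n) :
    Equiv.Perm.decomposeFin.symm (p, e * Equiv.swap i j)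
      = Equiv.Perm.decomposeFin.symm (p, e) * Equiv.swap i.succ j.succ := by
  ext k
  refine Fin.cases ?_ (fun k => ?_) k
  · rw [Equiv.Perm.mul_apply, Equiv.swap_apply_of_ne_of_ne (Fin.succ_ne_zero i).symm (Fin.succ_ne_zero j).symm]
    simp
  · rw [Equiv.Perm.mul_apply, ← (Fin.succ_injective n).map_swap]
    simp

theorem dec_ham {n : ℕ} (e c : Equiv.Perm (Fin n)) :
    hammingDist ⇑(Equiv.Perm.decomposeFin.symm ((0 : Fin (n+1)), c))
      ⇑(Equiv.Perm.decomposeFin.symm ((0 : Fin (n+1)), e)) ≤ hammingDist ⇑c ⇑e := by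
  unfold hammingDist
  have : (Finset.univ.filter fun i => Equiv.Perm.decomposeFin.symm ((0 : Fin (n+1)), c) i ≠
      Equiv.Perm.decomposeFin.symm ((0 : Fin (n+1)), e) i) ⊆
      (Finset.univ.filter fun i => c i ≠ e i).image Fin.succ := by
    intro i
    refine Fin.cases ?_ (fun i => ?_) i
    · simp
    · simp
  exact (Finset.card_le_card this).trans Finset.card_image_le

theorem dec_full {n : ℕ} (p : Fin (n+1)) (hp : p ≠ 0) (e : Equiv.Perm (Fin n)) (he : FullCyc e) :
    FullCyc (Equiv.Perm.decomposeFin.symm (p, e)) := by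
  obtain ⟨a, rfl⟩ := Fin.exists_succ_eq_of_ne_zero hp
  set g := Equiv.Perm.decomposeFin.symm (a.succ, e) with hg
  have step : ∀ x, g.SameCycle x (g x) := fun x =>
    (Equiv.Perm.sameCycle_apply_right).2 (Equiv.Perm.SameCycle.refl _ _)
  have g0 : g 0 = a.succ := by simp [hg]
  have h0 : g.SameCycle 0 a.succ := by have := step 0; rwa [g0] at this
  have h1 : ∀ x : Fin n, g.SameCycle x.succ (e x).succ := by
    intro x
    have hx : g x.succ = Equiv.swap 0 a.succ (e x).succ := by simp [hg]
    by_cases h : e x = a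
    · rw [h, Equiv.swap_apply_right] at hx
      have := step x.succ
      rw [hx] at this
      rw [h]; exact this.trans h0
    · rw [Equiv.swap_apply_of_ne_of_ne (Fin.succ_ne_zero _) (by simpa using h)] at hx
      rw [← hx]; exact step _
  have h2 : ∀ x y : Fin n, g.SameCycle x.succ y.succ := fun x y =>
    sameCycle_rel (e := e) (R := fun x y => g.SameCycle x.succ y.succ)
      (fun _ => Equiv.Perm.SameCycle.refl _ _) (fun _ _ _ a b => a.trans b) h1 (he x y)
  have h3 : ∀ x, g.SameCycle 0 x := by
    intro x
    refine Fin.cases ?_ (fun x => ?_) x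
    · exact Equiv.Perm.SameCycle.refl _ _
    · exact h0.trans (h2 _ _)
  intro x y
  exact (h3 x).symm.trans (h3 y)

theorem exists_coupling (n : ℕ) : ∃ c : Equiv.Perm (Fin n) → Equiv.Perm (Fin n),
    (∀ σ, FullCyc (c σ)) ∧
    ∑ σ, (hammingDist ⇑(c σ) ⇑σ : ℝ) ≤ (n.factorial : ℝ) * (2 * (harmonic n : ℝ)) := by
  induction n with
  | zero => exact ⟨id, fun σ x => x.elim0, by simp⟩
  | succ n ih =>
    obtain ⟨c, hc, hs⟩ := ih
    rcases Nat.eq_zero_or_pos n with h | hn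
    · subst h
      refine ⟨id, fun σ x y => by rw [show x = y from Subsingleton.elim (α := Fin 1) x y], by simp⟩
    · let p1 : Fin (n+1) := ⟨1, by omega⟩
      have hp1 : p1 ≠ 0 := by
        intro h; have := congrArg Fin.val h; simp [p1] at this
      let c' : Equiv.Perm (Fin (n+1)) → Equiv.Perm (Fin (n+1)) := fun σ =>
        Equiv.Perm.decomposeFin.symm
          (if (Equiv.Perm.decomposeFin σ).1 = 0 then p1 else (Equiv.Perm.decomposeFin σ).1,
            c (Equiv.Perm.decomposeFin σ).2)
      refine ⟨c', ?_, ?_⟩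
      · intro σ
        apply dec_full _ _ _ (hc _)
        split_ifs with h
        · exact hp1
        · exact h
      · rw [← Equiv.sum_comp (Equiv.Perm.decomposeFin (n := n)).symm, Fintype.sum_prod_type,
          Finset.sum_comm]
        have hb : ∀ (e : Equiv.Perm (Fin n)) (p : Fin (n+1)),
            (hammingDist ⇑(c' (Equiv.Perm.decomposeFin.symm (p, e)))
              ⇑(Equiv.Perm.decomposeFin.symm (p, e)) : ℝ)
              ≤ (hammingDist ⇑(c e) ⇑e : ℝ) + if p = 0 then 2 else 0 := by
          intro e p
          simp only [c', Equiv.apply_symm_apply]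
          split_ifs with h
          · subst h
            have a := dec_ham e (c e)
            have b := ham_swap 0 p1 (Equiv.Perm.decomposeFin.symm ((0 : Fin (n+1)), c e))
            rw [← dec_mul] at b
            have := (hammingDist_triangle _ _ _).trans (Nat.add_le_add b a)
            exact_mod_cast this.trans (by omega)
          · rw [dec_mul p (c e), dec_mul p e, ham_mul_left]
            have := dec_ham e (c e)
            simpa using this
        calc _ ≤ ∑ e : Equiv.Perm (Fin n), ∑ p : Fin (n+1),
              ((hammingDist ⇑(c e) ⇑e : ℝ) + if p = 0 then 2 else 0) :=
              Finset.sum_le_sum fun e _ => Finset.sum_le_sum fun p _ => hb e p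
          _ = (n+1) * ∑ e : Equiv.Perm (Fin n), (hammingDist ⇑(c e) ⇑e : ℝ) + 2 * n.factorial := by
              simp [Finset.sum_add_distrib, Finset.mul_sum, Fintype.card_perm]
              ring
          _ ≤ (n+1) * ((n.factorial : ℝ) * (2 * (harmonic n : ℝ))) + 2 * n.factorial := by
              gcongr
          _ = _ := by
              rw [harmonic_succ, Nat.factorial_succ]
              push_cast
              have : (n : ℝ) + 1 ≠ 0 := by positivity
              field_simp

end Combi

section Conc

theorem cardPerm_pos (n : ℕ) : (0 : ℝ) < (Fintype.card (Equiv.Perm (Fin n)) : ℝ) := by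
  exact_mod_cast Fintype.card_pos

theorem En_mono {n : ℕ} {g h : Equiv.Perm (Fin n) → ℝ} (H : ∀ σ, g σ ≤ h σ) : En g ≤ En h := by
  unfold En
  have := cardPerm_pos n
  gcongr
  exact H _

theorem En_const {n : ℕ} (c : ℝ) : En (n := n) (fun _ => c) = c := by
  unfold En
  have := (cardPerm_pos n).ne'
  simp only [Finset.sum_const, Finset.card_univ, nsmul_eq_mul]
  field_simp

theorem En_add {n : ℕ} (g h : Equiv.Perm (Fin n) → ℝ) :
    En (fun σ => g σ + h σ) = En g + En h := by
  unfold En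
  rw [Finset.sum_add_distrib, add_div]

theorem En_sub {n : ℕ} (g h : Equiv.Perm (Fin n) → ℝ) :
    En (fun σ => g σ - h σ) = En g - En h := by
  unfold En
  rw [Finset.sum_sub_distrib, sub_div]

theorem En_mul {n : ℕ} (c : ℝ) (g : Equiv.Perm (Fin n) → ℝ) :
    En (fun σ => c * g σ) = c * En g := by
  unfold En
  rw [← Finset.mul_sum, mul_div_assoc]

theorem En_sum {n : ℕ} {ι : Type*} (s : Finset ι) (g : ι → Equiv.Perm (Fin n) → ℝ) :
    En (fun σ => ∑ i ∈ s, g i σ) = ∑ i ∈ s, En (g i) := by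
  unfold En
  rw [Finset.sum_comm, Finset.sum_div]

theorem En_abs_le {n : ℕ} (g : Equiv.Perm (Fin n) → ℝ) : |En g| ≤ En (fun σ => |g σ|) := by
  unfold En
  rw [abs_div, abs_of_pos (cardPerm_pos n)]
  have := cardPerm_pos n
  gcongr
  exact Finset.abs_sum_le_sum_abs _ _

theorem En_mul_right {n : ℕ} (v : Equiv.Perm (Fin n)) (g : Equiv.Perm (Fin n) → ℝ) :
    En (fun w => g (w * v)) = En g := by
  unfold En
  congr 1
  exact Equiv.sum_comp (Equiv.mulRight v) g

theorem En_conj {n : ℕ} (v : Equiv.Perm (Fin n)) (g : Equiv.Perm (Fin n) → ℝ) :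
    En (fun w => g (v * w * v⁻¹)) = En g := by
  unfold En
  congr 1
  exact Equiv.sum_comp (MulAut.conj v).toEquiv g

theorem En_comm {n m : ℕ} (g : Equiv.Perm (Fin n) → Equiv.Perm (Fin m) → ℝ) :
    En (fun σ => En (fun w => g σ w)) = En (fun w => En (fun σ => g σ w)) := by
  unfold En
  simp only [← Finset.sum_div]
  rw [Finset.sum_comm, div_right_comm]

theorem En_succ {n : ℕ} (g : Equiv.Perm (Fin (n+1)) → ℝ) :
    En g = (∑ p : Fin (n+1), En (fun e => g (Equiv.Perm.decomposeFin.symm (p, e)))) / (n+1) := by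
  unfold En
  rw [← Equiv.sum_comp (Equiv.Perm.decomposeFin (n := n)).symm, Fintype.sum_prod_type,
    ← Finset.sum_div, div_div]
  congr 1
  simp only [Fintype.card_perm, Fintype.card_fin, Nat.factorial_succ]
  push_cast; ring

theorem hoeffding_fin {ι : Type*} [Fintype ι] (Y : ι → ℝ) (B : ℝ) (hB : ∀ a, |Y a| ≤ B)
    (h0 : ∑ a, Y a = 0) : ∑ a, Real.exp (Y a) ≤ Fintype.card ι * Real.exp (B ^ 2 / 2) := by
  rcases isEmpty_or_nonempty ι with h | ⟨⟨a0⟩⟩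
  · simp
  have hB0 : 0 ≤ B := (abs_nonneg _).trans (hB a0)
  rcases hB0.eq_or_lt with h | hpos
  · subst h
    have : ∀ a, Y a = 0 := fun a => abs_nonpos_iff.1 (hB a)
    simp [this]
  have hc : ∀ a, Real.exp (Y a) ≤ Real.cosh B + Y a * (Real.sinh B / B) := by
    intro a
    have h := abs_le.1 (hB a)
    have := convexOn_exp.2 (Set.mem_univ B) (Set.mem_univ (-B))
      (show 0 ≤ (B + Y a) / (2 * B) from div_nonneg (by linarith) (by linarith))
      (show 0 ≤ (B - Y a) / (2 * B) from div_nonneg (by linarith) (by linarith))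
      (by field_simp; ring)
    simp only [smul_eq_mul] at this
    have e : (B + Y a) / (2 * B) * B + (B - Y a) / (2 * B) * -B = Y a := by field_simp; ring
    rw [e] at this
    refine this.trans (le_of_eq ?_)
    rw [Real.cosh_eq, Real.sinh_eq]
    field_simp
    ring
  calc _ ≤ ∑ a, (Real.cosh B + Y a * (Real.sinh B / B)) := Finset.sum_le_sum fun a _ => hc a
    _ = Fintype.card ι * Real.cosh B := by
      rw [Finset.sum_add_distrib, ← Finset.sum_mul, h0]; simp
    _ ≤ _ := by gcongr; exact Real.cosh_le_exp_half_sq B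

theorem conc (n : ℕ) : ∀ (F : Equiv.Perm (Fin n) → ℝ) (L : ℝ),
    (∀ σ i j, |F (σ * Equiv.swap i j) - F σ| ≤ L) → ∀ t : ℝ,
    En (fun σ => Real.exp (t * (F σ - En F))) ≤ Real.exp (2 * n * t ^ 2 * L ^ 2) := by
  induction n with
  | zero =>
    intro F L _ t
    have : ∀ σ, F σ - En F = 0 := by
      intro σ
      have : F = fun _ => F σ := by funext w; rw [Subsingleton.elim w σ]
      rw [this, En_const, sub_self]
    simp [this, En_const]
  | succ n ih =>
    intro F L hF t
    set m : Fin (n+1) → ℝ := fun p => En (fun e => F (Equiv.Perm.decomposeFin.symm (p, e))) with hm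
    have hmean : En F = (∑ p, m p) / (n+1) := En_succ F
    have hleft : ∀ σ i j, |F (Equiv.swap i j * σ) - F σ| ≤ L := by
      intro σ i j
      rw [Equiv.swap_mul_eq_mul_swap]
      exact hF _ _ _
    have hmp : ∀ p, |m p - m 0| ≤ L := by
      intro p
      rw [hm]; simp only
      rw [← En_sub]
      refine (En_abs_le _).trans ?_
      refine le_trans (En_mono (h := fun _ => L) fun e => ?_) (En_const L).le
      rw [dec_mul p e]
      exact hleft _ _ _
    have hN : (0 : ℝ) < (n : ℝ) + 1 := by positivity
    have hmm : ∀ p, |m p - En F| ≤ 2 * L := by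
      intro p
      have h1 : En F - m 0 = (∑ a, (m a - m 0)) / (n+1) := by
        rw [hmean, Finset.sum_sub_distrib]; simp; field_simp
      have h2 : |En F - m 0| ≤ L := by
        rw [h1, abs_div, abs_of_pos hN, div_le_iff₀ hN]
        refine (Finset.abs_sum_le_sum_abs _ _).trans ?_
        refine (Finset.sum_le_sum fun a _ => hmp a).trans ?_
        simp [mul_comm]
      have h3 := hmp p
      rw [abs_le] at *
      constructor <;> linarith
    have hind : ∀ p, En (fun e => Real.exp (t * (F (Equiv.Perm.decomposeFin.symm (p, e)) - En F)))
        ≤ Real.exp (t * (m p - En F)) * Real.exp (2 * n * t ^ 2 * L ^ 2) := by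
      intro p
      have := ih (fun e => F (Equiv.Perm.decomposeFin.symm (p, e))) L (by
        intro σ i j
        rw [dec_swap]
        exact hF _ _ _) t
      have e1 : (fun e => Real.exp (t * (F (Equiv.Perm.decomposeFin.symm (p, e)) - En F)))
          = fun e => Real.exp (t * (m p - En F)) *
            Real.exp (t * (F (Equiv.Perm.decomposeFin.symm (p, e)) - m p)) := by
        funext e
        rw [← Real.exp_add]; congr 1; ring
      rw [e1, En_mul]
      gcongr
    rw [En_succ, div_le_iff₀ hN]
    have hh := hoeffding_fin (fun p => t * (m p - En F)) (|t| * (2 * L)) (by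
      intro p; rw [abs_mul]; gcongr; exact hmm p) (by
      rw [← Finset.mul_sum, Finset.sum_sub_distrib, hmean]; simp; right; field_simp; simp)
    calc _ ≤ ∑ p, Real.exp (t * (m p - En F)) * Real.exp (2 * n * t ^ 2 * L ^ 2) :=
          Finset.sum_le_sum fun p _ => hind p
      _ = (∑ p, Real.exp (t * (m p - En F))) * Real.exp (2 * n * t ^ 2 * L ^ 2) := by
          rw [Finset.sum_mul]
      _ ≤ (Fintype.card (Fin (n+1)) * Real.exp ((|t| * (2 * L)) ^ 2 / 2)) * Real.exp (2 * n * t ^ 2 * L ^ 2) := by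
          gcongr
      _ = _ := by
          rw [mul_assoc, ← Real.exp_add, mul_comm]
          congr 1
          · congr 1
            rw [mul_pow, sq_abs]; push_cast; ring
          · simp

theorem conc_moment {n : ℕ} (F : Equiv.Perm (Fin n) → ℝ) (L : ℝ)
    (hF : ∀ σ i j, |F (σ * Equiv.swap i j) - F σ| ≤ L) (A : ℝ) (hA : n * L ^ 2 ≤ A) (k : ℕ) :
    En (fun σ => (F σ - En F) ^ (2 * k)) ≤ (2 * k).factorial * (2 * Real.exp (2 * A)) := by
  have hpt : ∀ x : ℝ, x ^ (2 * k) ≤ (2 * k).factorial * (Real.exp (1 * x) + Real.exp (-1 * x)) := by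
    intro x
    have h := Real.pow_div_factorial_le_exp |x| (abs_nonneg x) (2 * k)
    rw [div_le_iff₀ (by positivity), pow_mul, sq_abs, ← pow_mul] at h
    refine h.trans ?_
    rw [mul_comm (Real.exp _)]
    gcongr
    rcases abs_cases x with ⟨h, _⟩ | ⟨h, _⟩ <;> rw [h] <;>
      simp only [one_mul, neg_mul] <;> linarith [Real.exp_pos x, Real.exp_pos (-x)]
  refine (En_mono fun σ => hpt (F σ - En F)).trans ?_
  rw [En_mul, En_add]
  have h1 := conc n F L hF 1
  have h2 := conc n F L hF (-1)
  have h3 : Real.exp (2 * n * 1 ^ 2 * L ^ 2) ≤ Real.exp (2 * A) := by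
    apply Real.exp_le_exp.2; nlinarith
  have h4 : Real.exp (2 * n * (-1) ^ 2 * L ^ 2) ≤ Real.exp (2 * A) := by
    apply Real.exp_le_exp.2; nlinarith
  gcongr
  linarith

end Conc

section Vari

theorem R_swap {n : ℕ} (a : Fin n → Fin n → ℝ) (σ : Equiv.Perm (Fin n)) (i j : Fin n) :
    (∑ k, a k ((σ * Equiv.swap i j) k)) - ∑ k, a k (σ k) =
      a i (σ j) + a j (σ i) - a i (σ i) - a j (σ j) := by
  by_cases h : i = j
  · subst h; simp
  · rw [← Finset.sum_sub_distrib, Fintype.sum_eq_add i j h]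
    · simp; ring
    · intro x hx
      rw [Equiv.Perm.mul_apply, Equiv.swap_apply_of_ne_of_ne hx.1 hx.2, sub_self]

theorem R_swap_sum {n : ℕ} (a : Fin n → Fin n → ℝ) (σ : Equiv.Perm (Fin n)) :
    ∑ i : Fin n, ∑ j : Fin n, ((∑ k, a k ((σ * Equiv.swap i j) k)) - ∑ k, a k (σ k)) =
      2 * (∑ i, ∑ j, a i j) - 2 * n * ∑ k, a k (σ k) := by
  simp only [R_swap, Finset.sum_sub_distrib, Finset.sum_add_distrib]
  have h1 : ∀ i, ∑ j, a i (σ j) = ∑ j, a i j := fun i => Equiv.sum_comp σ (a i)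
  have h2 : ∑ i, ∑ j, a j (σ i) = ∑ i, ∑ j, a i j := by
    rw [Finset.sum_comm]; simp only [h1]
  rw [h2]
  simp only [h1]
  simp [← Finset.mul_sum]
  ring

theorem var_eq {n : ℕ} (hn : 0 < n) (a : Fin n → Fin n → ℝ) :
    4 * n * VarN (fun σ : Equiv.Perm (Fin n) => ∑ k, a k (σ k)) =
      ∑ i, ∑ j, En (fun σ : Equiv.Perm (Fin n) =>
        (a i (σ j) + a j (σ i) - a i (σ i) - a j (σ j)) ^ 2) := by
  set R : Equiv.Perm (Fin n) → ℝ := fun σ => ∑ k, a k (σ k) with hR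
  set S := ∑ i, ∑ j, a i j with hS
  have hsum : ∀ σ, ∑ i, ∑ j, (R (σ * Equiv.swap i j) - R σ) = 2 * S - 2 * n * R σ :=
    fun σ => R_swap_sum a σ
  have hmean : (n : ℝ) * En R = S := by
    have h1 : En (fun σ => ∑ i, ∑ j, (R (σ * Equiv.swap i j) - R σ)) = 0 := by
      rw [En_sum]
      refine Finset.sum_eq_zero fun i _ => ?_
      rw [En_sum]
      refine Finset.sum_eq_zero fun j _ => ?_
      rw [En_sub, En_mul_right, sub_self]
    have h2 : En (fun σ => ∑ i, ∑ j, (R (σ * Equiv.swap i j) - R σ)) = 2 * S - 2 * n * En R := by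
      simp only [hsum]
      rw [En_sub, En_const, En_mul]
    linarith
  have hvar : VarN R = En (fun σ => R σ ^ 2) - (En R) ^ 2 := by
    unfold VarN
    have : (fun σ => (R σ - En R) ^ 2) = fun σ => (R σ ^ 2 - (2 * En R) * R σ) + (En R) ^ 2 := by
      funext σ; ring
    rw [this, En_add, En_sub, En_mul, En_const]; ring
  have hD : ∀ i j, En (fun σ : Equiv.Perm (Fin n) =>
        (a i (σ j) + a j (σ i) - a i (σ i) - a j (σ j)) ^ 2) =
        En (fun σ => (-2) * (R σ * (R (σ * Equiv.swap i j) - R σ))) := by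
    intro i j
    have : (fun σ : Equiv.Perm (Fin n) =>
        (a i (σ j) + a j (σ i) - a i (σ i) - a j (σ j)) ^ 2) =
        fun σ => ((fun w => R w ^ 2) (σ * Equiv.swap i j) - R σ ^ 2) + 
          (-2) * (R σ * (R (σ * Equiv.swap i j) - R σ)) := by
      funext σ
      rw [← R_swap]
      simp only [hR]
      ring
    rw [this, En_add, En_sub, En_mul_right (Equiv.swap i j) (fun w => R w ^ 2), sub_self, zero_add]
  simp only [hD]
  have e : ∑ i, ∑ j, En (fun σ => (-2) * (R σ * (R (σ * Equiv.swap i j) - R σ))) =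
      En (fun σ => (-2) * (R σ * (2 * S - 2 * n * R σ))) := by
    simp only [← hsum]
    simp only [Finset.mul_sum]
    rw [En_sum]
    simp only [En_sum]
  rw [e]
  have : (fun σ => (-2) * (R σ * (2 * S - 2 * n * R σ))) =
      fun σ => (4 * n) * R σ ^ 2 - (4 * S) * R σ := by funext σ; ring
  rw [this, En_sub, En_mul, En_mul, hvar, ← hmean]
  ring

theorem exists_perm_two {α : Type*} [DecidableEq α] {i j k l : α} (h : i ≠ j) (h' : k ≠ l) :
    ∃ w : Equiv.Perm α, w i = k ∧ w j = l := by
  refine ⟨Equiv.swap (Equiv.swap i k j) l * Equiv.swap i k, ?_, by simp⟩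
  rw [Equiv.Perm.mul_apply, Equiv.swap_apply_left, Equiv.swap_apply_of_ne_of_ne _ h']
  intro hh
  have := congrArg (Equiv.swap i k) hh
  simp at this
  exact h this

theorem En_two {n : ℕ} {i j : Fin n} (h : i ≠ j) (g : Fin n → Fin n → ℝ) :
    (n * (n - 1) : ℝ) * En (fun σ : Equiv.Perm (Fin n) => g (σ i) (σ j)) =
      ∑ x ∈ (Finset.univ : Finset (Fin n)).offDiag, g x.1 x.2 := by
  have h1 : ∀ x ∈ (Finset.univ : Finset (Fin n)).offDiag,
      En (fun σ : Equiv.Perm (Fin n) => g (σ x.1) (σ x.2)) =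
      En (fun σ : Equiv.Perm (Fin n) => g (σ i) (σ j)) := by
    intro x hx
    obtain ⟨w, h1, h2⟩ := exists_perm_two h (Finset.mem_offDiag.1 hx).2.2
    rw [← En_mul_right w (fun σ : Equiv.Perm (Fin n) => g (σ i) (σ j))]
    simp [h1, h2]
  have h2 : ∑ x ∈ (Finset.univ : Finset (Fin n)).offDiag,
      En (fun σ : Equiv.Perm (Fin n) => g (σ x.1) (σ x.2)) =
      (n * (n - 1) : ℝ) * En (fun σ : Equiv.Perm (Fin n) => g (σ i) (σ j)) := by
    rw [Finset.sum_congr rfl h1, Finset.sum_const, Finset.offDiag_card, nsmul_eq_mul]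
    congr 1
    have : n ≤ n * n := Nat.le_mul_self n
    simp only [Finset.card_univ, Fintype.card_fin]
    push_cast [Nat.cast_sub this]; ring
  rw [← h2, ← En_sum]
  have h3 : ∀ σ : Equiv.Perm (Fin n), ∑ x ∈ (Finset.univ : Finset (Fin n)).offDiag, g (σ x.1) (σ x.2)
      = ∑ x ∈ (Finset.univ : Finset (Fin n)).offDiag, g x.1 x.2 := by
    intro σ
    refine Finset.sum_bij (fun x _ => (σ x.1, σ x.2)) ?_ ?_ ?_ ?_
    · intro x hx
      simpa using hx
    · intro x _ y _ hxy
      simpa [Prod.ext_iff] using hxy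
    · intro y hy
      refine ⟨(σ⁻¹ y.1, σ⁻¹ y.2), by simpa using hy, by simp⟩
    · intros; rfl
  simp only [h3]
  rw [En_const]

theorem var_lower (q : ℝ) (hq : 1 ≤ q) (n : ℕ) (hn : 4 ≤ n) :
    ((8 : ℝ)⁻¹ ^ (q + 2) * (n : ℝ) ^ (q + 1 / 2)) ^ 2 ≤ VarN (rhoq q (n := n)) := by
  set m := n / 4 with hm
  have hm4 : 4 * m ≤ n := by omega
  have hm8 : n ≤ 8 * m := by omega
  have hm1 : 1 ≤ m := by omega
  have hnR : (0 : ℝ) < n := by exact_mod_cast (by omega : 0 < n)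
  have hmR : (0 : ℝ) < m := by exact_mod_cast hm1
  let a : Fin n → Fin n → ℝ := fun i k => |((k : ℕ) : ℝ) - ((i : ℕ) : ℝ)| ^ q
  have hveq := var_eq (by omega : 0 < n) a
  have hrho : (fun σ : Equiv.Perm (Fin n) => ∑ k, a k (σ k)) = rhoq q (n := n) := by
    funext σ; rfl
  rw [hrho] at hveq
  let lo : Finset (Fin n) := Finset.univ.filter fun i => (i : ℕ) < m
  let hi : Finset (Fin n) := Finset.univ.filter fun i => n - m ≤ (i : ℕ)
  have hlo : lo.card = m := by
    have : lo = (Finset.range m).attachFin (fun i hi => by have := Finset.mem_range.1 hi; omega) := by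
      ext x; simp [lo]
    rw [this]; simp
  have hhi : hi.card = m := by
    have : hi = (Finset.Ico (n - m) n).attachFin (fun i hi => (Finset.mem_Ico.1 hi).2) := by
      ext x; simp [hi]
    rw [this]; simp; omega
  have hg : ∀ i ∈ lo, ∀ j ∈ hi, ∀ u ∈ lo, ∀ v ∈ hi,
      4 * ((m : ℝ) ^ q) ^ 2 ≤ (a i v + a j u - a i u - a j v) ^ 2 := by
    intro i hi' j hj u hu v hv
    simp only [lo, hi, Finset.mem_filter, Finset.mem_univ, true_and] at hi' hj hu hv
    have close : ∀ x y : Fin n, ((x : ℕ) : ℝ) - (y : ℕ) ≤ m → ((y : ℕ) : ℝ) - (x : ℕ) ≤ m →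
        a x y ≤ (m : ℝ) ^ q := by
      intro x y h1 h2
      apply Real.rpow_le_rpow (abs_nonneg _) _ (by linarith)
      rw [abs_le]; constructor <;> linarith
    have far : ∀ x y : Fin n, 2 * (m : ℝ) ≤ |((y : ℕ) : ℝ) - (x : ℕ)| → 2 * (m : ℝ) ^ q ≤ a x y := by
      intro x y h
      have h2 : (2 : ℝ) ≤ 2 ^ q := by
        calc (2 : ℝ) = 2 ^ (1 : ℝ) := by simp
          _ ≤ 2 ^ q := Real.rpow_le_rpow_of_exponent_le (by norm_num) hq
      calc 2 * (m : ℝ) ^ q ≤ 2 ^ q * (m : ℝ) ^ q := by gcongr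
        _ = (2 * (m : ℝ)) ^ q := by rw [Real.mul_rpow (by norm_num) hmR.le]
        _ ≤ _ := Real.rpow_le_rpow (by positivity) h (by linarith)
    have b1 : ((i : ℕ) : ℝ) ≤ m := by exact_mod_cast hi'.le
    have b2 : ((u : ℕ) : ℝ) ≤ m := by exact_mod_cast hu.le
    have b3 : (n : ℝ) ≤ (j : ℕ) + m := by exact_mod_cast (by omega : n ≤ j + m)
    have b4 : (n : ℝ) ≤ (v : ℕ) + m := by exact_mod_cast (by omega : n ≤ v + m)
    have b5 : ((j : ℕ) : ℝ) ≤ n := by exact_mod_cast j.2.le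
    have b6 : ((v : ℕ) : ℝ) ≤ n := by exact_mod_cast v.2.le
    have b7 : 4 * (m : ℝ) ≤ n := by exact_mod_cast hm4
    have c1 : (0 : ℝ) ≤ (i : ℕ) := by positivity
    have c2 : (0 : ℝ) ≤ (u : ℕ) := by positivity
    have d1 := close i u (by linarith) (by linarith)
    have d2 := close j v (by linarith) (by linarith)
    have d3 := far i v (by rw [le_abs]; left; linarith)
    have d4 := far j u (by rw [le_abs]; right; linarith)
    have : 2 * (m : ℝ) ^ q ≤ a i v + a j u - a i u - a j v := by linarith
    have hp : 0 < (m : ℝ) ^ q := Real.rpow_pos_of_pos hmR q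
    nlinarith
  have hdisj : ∀ i ∈ lo, ∀ j ∈ hi, i ≠ j := by
    intro i hi' j hj h
    subst h
    simp only [lo, hi, Finset.mem_filter, Finset.mem_univ, true_and] at hi' hj
    omega
  have hn1 : (0 : ℝ) < (n : ℝ) - 1 := by
    have : (4 : ℝ) ≤ n := by exact_mod_cast hn
    linarith
  have hE : ∀ i ∈ lo, ∀ j ∈ hi, (m : ℝ) ^ 2 * (4 * ((m : ℝ) ^ q) ^ 2) / (n * n) ≤
      En (fun σ : Equiv.Perm (Fin n) => (a i (σ j) + a j (σ i) - a i (σ i) - a j (σ j)) ^ 2) := by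
    intro i hi' j hj
    have h2 := En_two (hdisj i hi' j hj) (fun u v => (a i v + a j u - a i u - a j v) ^ 2)
    have h3 : (m : ℝ) ^ 2 * (4 * ((m : ℝ) ^ q) ^ 2) ≤
        ∑ x ∈ (Finset.univ : Finset (Fin n)).offDiag, (a i x.2 + a j x.1 - a i x.1 - a j x.2) ^ 2 := by
      calc _ = ∑ x ∈ lo ×ˢ hi, (4 * ((m : ℝ) ^ q) ^ 2) := by
            rw [Finset.sum_const, Finset.card_product, hlo, hhi, nsmul_eq_mul]; push_cast; ring
        _ ≤ ∑ x ∈ lo ×ˢ hi, (a i x.2 + a j x.1 - a i x.1 - a j x.2) ^ 2 := by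
            refine Finset.sum_le_sum fun x hx => ?_
            rw [Finset.mem_product] at hx
            exact hg i hi' j hj _ hx.1 _ hx.2
        _ ≤ _ := by
            refine Finset.sum_le_sum_of_subset_of_nonneg ?_ (fun _ _ _ => sq_nonneg _)
            intro x hx
            rw [Finset.mem_product] at hx
            rw [Finset.mem_offDiag]
            exact ⟨Finset.mem_univ _, Finset.mem_univ _, hdisj _ hx.1 _ hx.2⟩
    rw [div_le_iff₀ (by positivity)]
    rw [← h2] at h3
    refine h3.trans ?_
    rw [mul_comm]
    have hE0 : 0 ≤ En (fun σ : Equiv.Perm (Fin n) => (a i (σ j) + a j (σ i) - a i (σ i) - a j (σ j)) ^ 2) := by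
      refine le_trans (En_const (n := n) 0).ge (En_mono fun σ => sq_nonneg _)
    refine mul_le_mul_of_nonneg_left ?_ hE0
    nlinarith
  have hnon : ∀ i j, 0 ≤ En (fun σ : Equiv.Perm (Fin n) => (a i (σ j) + a j (σ i) - a i (σ i) - a j (σ j)) ^ 2) := by
    intro i j
    refine le_trans (En_const (n := n) 0).ge (En_mono fun σ => sq_nonneg _)
  have hfin : (m : ℝ) ^ 2 * ((m : ℝ) ^ 2 * (4 * ((m : ℝ) ^ q) ^ 2) / (n * n)) ≤
      4 * n * VarN (rhoq q (n := n)) := by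
    rw [hveq]
    calc _ = ∑ i ∈ lo, ∑ j ∈ hi, ((m : ℝ) ^ 2 * (4 * ((m : ℝ) ^ q) ^ 2) / (n * n)) := by
          simp only [Finset.sum_const, hlo, hhi, nsmul_eq_mul]; ring
      _ ≤ ∑ i ∈ lo, ∑ j ∈ hi, En (fun σ : Equiv.Perm (Fin n) =>
            (a i (σ j) + a j (σ i) - a i (σ i) - a j (σ j)) ^ 2) :=
          Finset.sum_le_sum fun i hi' => Finset.sum_le_sum fun j hj => hE i hi' j hj
      _ ≤ ∑ i ∈ lo, ∑ j, En (fun σ : Equiv.Perm (Fin n) =>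
            (a i (σ j) + a j (σ i) - a i (σ i) - a j (σ j)) ^ 2) :=
          Finset.sum_le_sum fun i _ => Finset.sum_le_sum_of_subset_of_nonneg (Finset.subset_univ _)
            fun j _ _ => hnon i j
      _ ≤ _ := Finset.sum_le_sum_of_subset_of_nonneg (Finset.subset_univ _)
            fun i _ _ => Finset.sum_nonneg fun j _ => hnon i j
  have hkey : (8 : ℝ)⁻¹ ^ (q + 2) * (n : ℝ) ^ (q + 2) ≤ (m : ℝ) ^ 2 * (m : ℝ) ^ q := by
    rw [← Real.mul_rpow (by norm_num) hnR.le]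
    have : (m : ℝ) ^ 2 * (m : ℝ) ^ q = (m : ℝ) ^ (q + 2) := by
      rw [Real.rpow_add hmR, mul_comm]; norm_num
    rw [this]
    apply Real.rpow_le_rpow (by positivity) _ (by linarith)
    have : (n : ℝ) ≤ 8 * m := by exact_mod_cast hm8
    linarith
  have hhalf : (n : ℝ) ^ (q + 2) = (n : ℝ) ^ (q + 1/2) * (n : ℝ) ^ ((3 : ℝ)/2) := by
    rw [← Real.rpow_add hnR]; congr 1; ring
  have h32 : ((n : ℝ) ^ ((3 : ℝ)/2)) ^ 2 = (n : ℝ) ^ 3 := by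
    rw [← Real.rpow_natCast, ← Real.rpow_mul hnR.le, ← Real.rpow_natCast]; norm_num
  have hsq : ((8 : ℝ)⁻¹ ^ (q + 2) * (n : ℝ) ^ (q + 1/2)) ^ 2 * (n : ℝ) ^ 3 ≤ ((m : ℝ) ^ 2 * (m : ℝ) ^ q) ^ 2 := by
    rw [← h32, ← mul_pow, mul_assoc, ← hhalf]
    gcongr
  have hfin2 : ((m : ℝ) ^ 2 * (m : ℝ) ^ q) ^ 2 ≤ VarN (rhoq q (n := n)) * (n : ℝ) ^ 3 := by
    rw [← mul_div_assoc, div_le_iff₀ (by positivity)] at hfin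
    nlinarith
  exact le_of_mul_le_mul_right (hsq.trans hfin2) (by positivity)

end Vari

section Fin

theorem exists_perm_partition {n : ℕ} (lam : (Fintype.card (Fin n)).Partition) :
    ∃ τ : Equiv.Perm (Fin n), τ.partition = lam := by
  have hsplit : lam.parts.filter (fun x => 2 ≤ x) + lam.parts.filter (fun x => ¬ 2 ≤ x) = lam.parts :=
    Multiset.filter_add_not _ _
  have hones : lam.parts.filter (fun x => ¬ 2 ≤ x) =
      Multiset.replicate (lam.parts.filter (fun x => ¬ 2 ≤ x)).card 1 := by
    rw [Multiset.eq_replicate]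
    refine ⟨rfl, fun b hb => ?_⟩
    rw [Multiset.mem_filter] at hb
    have := lam.parts_pos hb.1
    omega
  have hsum : (lam.parts.filter (fun x => 2 ≤ x)).sum +
      (lam.parts.filter (fun x => ¬ 2 ≤ x)).card = Fintype.card (Fin n) := by
    have h := congrArg Multiset.sum hsplit
    rw [Multiset.sum_add, lam.parts_sum] at h
    rw [hones] at h
    simpa using h
  obtain ⟨τ, hτ⟩ := (Equiv.Perm.exists_with_cycleType_iff (Fin n)
    (m := lam.parts.filter (fun x => 2 ≤ x))).2
    ⟨by omega, fun a ha => (Multiset.mem_filter.1 ha).2⟩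
  refine ⟨τ, ?_⟩
  apply Nat.Partition.ext
  rw [Equiv.Perm.parts_partition, ← Equiv.Perm.sum_cycleType, hτ]
  conv_rhs => rw [← hsplit]
  congr 1
  rw [hones]
  congr 1
  omega

theorem class_avg {n : ℕ} (g : Equiv.Perm (Fin n) → ℝ) (v τ : Equiv.Perm (Fin n)) :
    En (fun w => g (w * (v * τ * v⁻¹) * w⁻¹)) = En (fun w => g (w * τ * w⁻¹)) := by
  rw [← En_mul_right v (fun w => g (w * τ * w⁻¹))]
  simp only [mul_inv_rev, mul_assoc]

theorem EnCond_eq {n : ℕ} (τ : Equiv.Perm (Fin n)) (g : Equiv.Perm (Fin n) → ℝ) :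
    EnCond τ.partition g = En (fun w => g (w * τ * w⁻¹)) := by
  unfold EnCond
  set C := Finset.univ.filter (fun σ : Equiv.Perm (Fin n) => σ.partition = τ.partition) with hC
  have hmem : ∀ σ, σ ∈ C ↔ IsConj σ τ := by
    intro σ
    rw [Equiv.Perm.partition_eq_of_isConj, hC, Finset.mem_filter]; simp
  have hpos : (0 : ℝ) < C.card := by
    exact_mod_cast Finset.card_pos.2 ⟨τ, (hmem τ).2 (IsConj.refl _)⟩
  have h1 : ∀ σ ∈ C, En (fun w => g (w * σ * w⁻¹)) = En (fun w => g (w * τ * w⁻¹)) := by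
    intro σ hσ
    obtain ⟨v, hv⟩ := isConj_iff.1 ((hmem σ).1 hσ)
    rw [← hv, class_avg]
  have h2 : ∀ w : Equiv.Perm (Fin n), ∑ σ ∈ C, g (w * σ * w⁻¹) = ∑ σ ∈ C, g σ := by
    intro w
    refine Finset.sum_bij (fun σ _ => w * σ * w⁻¹) ?_ ?_ ?_ (fun _ _ => rfl)
    · intro σ hσ
      rw [hmem] at *
      refine IsConj.trans ?_ hσ
      exact (isConj_iff.2 ⟨w, rfl⟩ : IsConj σ (w * σ * w⁻¹)).symm
    · intro a _ b _ h
      simpa using h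
    · intro b hb
      refine ⟨w⁻¹ * b * w, ?_, by group⟩
      rw [hmem] at *
      refine IsConj.trans ?_ hb
      exact (isConj_iff.2 ⟨w⁻¹, by simp⟩ : IsConj b (w⁻¹ * b * w)).symm
  have h3 : ∑ σ ∈ C, g σ = C.card * En (fun w => g (w * τ * w⁻¹)) := by
    calc _ = En (n := n) (fun w => ∑ σ ∈ C, g (w * σ * w⁻¹)) := by simp only [h2, En_const]
      _ = ∑ σ ∈ C, En (fun w => g (w * σ * w⁻¹)) := En_sum _ _
      _ = _ := by rw [Finset.sum_congr rfl h1]; simp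
  rw [h3]; field_simp

theorem rhoq_ham (q : ℝ) (hq : 1 ≤ q) {n : ℕ} (σ σ' : Equiv.Perm (Fin n)) :
    |rhoq q σ - rhoq q σ'| ≤ hammingDist ⇑σ ⇑σ' * (n : ℝ) ^ q := by
  unfold rhoq
  rw [← Finset.sum_sub_distrib]
  refine (Finset.abs_sum_le_sum_abs _ _).trans ?_
  have hb : ∀ i k : Fin n, 0 ≤ |((k : ℕ) : ℝ) - ((i : ℕ) : ℝ)| ^ q ∧
      |((k : ℕ) : ℝ) - ((i : ℕ) : ℝ)| ^ q ≤ (n : ℝ) ^ q := by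
    intro i k
    refine ⟨by positivity, Real.rpow_le_rpow (abs_nonneg _) ?_ (by linarith)⟩
    have h1 : ((i : ℕ) : ℝ) ≤ n := by exact_mod_cast i.2.le
    have h2 : ((k : ℕ) : ℝ) ≤ n := by exact_mod_cast k.2.le
    have h3 : (0 : ℝ) ≤ (i : ℕ) := by positivity
    have h4 : (0 : ℝ) ≤ (k : ℕ) := by positivity
    rw [abs_le]; constructor <;> linarith
  have : ∀ i : Fin n, |(|((σ i : ℕ) : ℝ) - ((i : ℕ) : ℝ)| ^ q - |((σ' i : ℕ) : ℝ) - ((i : ℕ) : ℝ)| ^ q)|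
      ≤ if σ i ≠ σ' i then (n : ℝ) ^ q else 0 := by
    intro i
    split_ifs with h
    · have a := hb i (σ i)
      have b := hb i (σ' i)
      rw [abs_le]; constructor <;> linarith [a.1, a.2, b.1, b.2]
    · push Not at h
      rw [h]; simp
  refine (Finset.sum_le_sum fun i _ => this i).trans ?_
  rw [← Finset.sum_filter, Finset.sum_const, nsmul_eq_mul]
  unfold hammingDist
  apply le_of_eq
  congr!

noncomputable def kap (q : ℝ) (n : ℕ) : ℝ := (8 : ℝ) ^ (q + 2) * (n : ℝ) ^ (-(1/2) : ℝ)

theorem kap_nonneg (q : ℝ) (n : ℕ) : 0 ≤ kap q n := by unfold kap; positivity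

theorem kap_sq (q : ℝ) (n : ℕ) (hn : 4 ≤ n) : n * (kap q n) ^ 2 = ((8 : ℝ) ^ (q + 2)) ^ 2 := by
  have hnR : (0 : ℝ) < n := by exact_mod_cast (by omega : 0 < n)
  unfold kap
  rw [mul_pow, ← Real.rpow_natCast ((n : ℝ) ^ _), ← Real.rpow_mul hnR.le]
  norm_num
  rw [Real.rpow_neg_one]
  field_simp

theorem bar_ham (q : ℝ) (hq : 1 ≤ q) {n : ℕ} (hn : 4 ≤ n) (σ σ' : Equiv.Perm (Fin n)) :
    |rhoqBar q σ - rhoqBar q σ'| ≤ hammingDist ⇑σ ⇑σ' * kap q n := by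
  have hnR : (0 : ℝ) < n := by exact_mod_cast (by omega : 0 < n)
  have hc : (0 : ℝ) < (8 : ℝ)⁻¹ ^ (q + 2) * (n : ℝ) ^ (q + 1 / 2) := by positivity
  have hs : (8 : ℝ)⁻¹ ^ (q + 2) * (n : ℝ) ^ (q + 1 / 2) ≤ Real.sqrt (VarN (rhoq q (n := n))) :=
    Real.le_sqrt_of_sq_le (var_lower q hq n hn)
  have hspos := hc.trans_le hs
  unfold rhoqBar
  rw [← sub_div, sub_sub_sub_cancel_right, abs_div, abs_of_pos hspos]
  rw [div_le_iff₀ hspos]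
  refine (rhoq_ham q hq σ σ').trans ?_
  rw [mul_assoc]
  refine mul_le_mul_of_nonneg_left ?_ (by positivity)
  refine le_trans (le_of_eq ?_) (mul_le_mul_of_nonneg_left hs (kap_nonneg q n))
  unfold kap
  have e : (n : ℝ) ^ (q + 1/2) * (n : ℝ) ^ (-(1/2) : ℝ) = (n : ℝ) ^ q := by
    rw [← Real.rpow_add hnR]; congr 1; ring
  have e8 : (8 : ℝ) ^ (q + 2) * (8 : ℝ)⁻¹ ^ (q + 2) = 1 := by
    rw [← Real.mul_rpow (by norm_num) (by norm_num)]; norm_num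
  calc (n : ℝ) ^ q = ((8 : ℝ) ^ (q + 2) * (8 : ℝ)⁻¹ ^ (q + 2)) * ((n : ℝ) ^ (q + 1/2) * (n : ℝ) ^ (-(1/2) : ℝ)) := by
        rw [e, e8, one_mul]
    _ = _ := by ring

theorem En_bar (q : ℝ) {n : ℕ} : En (fun σ : Equiv.Perm (Fin n) => rhoqBar q σ) = 0 := by
  unfold rhoqBar
  simp only [div_eq_inv_mul]
  rw [En_mul, En_sub, En_const, sub_self, mul_zero]

noncomputable def Ck (q : ℝ) (k : ℕ) : ℝ :=
  (2 * k).factorial * (2 * Real.exp (2 * (16 * ((8 : ℝ) ^ (q + 2)) ^ 2)))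

theorem moment_unif (q : ℝ) (hq : 1 ≤ q) {n : ℕ} (hn : 4 ≤ n) (k : ℕ) :
    En (fun σ : Equiv.Perm (Fin n) => rhoqBar q σ ^ (2 * k)) ≤ Ck q k := by
  have := conc_moment (n := n) (fun σ => rhoqBar q σ) (4 * kap q n) (by
    intro σ i j
    refine (bar_ham q hq hn _ _).trans ?_
    refine mul_le_mul_of_nonneg_right ?_ (kap_nonneg q n)
    have := ham_swap_right i j σ
    exact_mod_cast (by omega : hammingDist ⇑(σ * Equiv.swap i j) ⇑σ ≤ 4))
    (16 * ((8 : ℝ) ^ (q + 2)) ^ 2) (by rw [← kap_sq q n hn]; apply le_of_eq; ring) k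
  rw [En_bar] at this
  simpa [Ck] using this

theorem moment_conj (q : ℝ) (hq : 1 ≤ q) {n : ℕ} (hn : 4 ≤ n) (k : ℕ) (τ : Equiv.Perm (Fin n)) :
    En (fun w : Equiv.Perm (Fin n) => (rhoqBar q (w * τ * w⁻¹) -
      En (fun w : Equiv.Perm (Fin n) => rhoqBar q (w * τ * w⁻¹))) ^ (2 * k)) ≤ Ck q k := by
  refine conc_moment (n := n) (fun w => rhoqBar q (w * τ * w⁻¹)) (4 * kap q n) (by
    intro w i j
    refine (bar_ham q hq hn _ _).trans ?_
    refine mul_le_mul_of_nonneg_right ?_ (kap_nonneg q n)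
    have e : w * Equiv.swap i j * τ * (w * Equiv.swap i j)⁻¹ =
        w * (Equiv.swap i j * (τ * Equiv.swap i j)) * w⁻¹ := by
      simp [mul_assoc]
    rw [e, ham_mul_right, ham_mul_left]
    have h1 := ham_swap i j (τ * Equiv.swap i j)
    have h2 := ham_swap_right i j τ
    have h3 := hammingDist_triangle ⇑(Equiv.swap i j * (τ * Equiv.swap i j)) ⇑(τ * Equiv.swap i j) ⇑τ
    exact_mod_cast (by omega : hammingDist ⇑(Equiv.swap i j * (τ * Equiv.swap i j)) ⇑τ ≤ 4))
    (16 * ((8 : ℝ) ^ (q + 2)) ^ 2) (by rw [← kap_sq q n hn]; apply le_of_eq; ring) k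

theorem coupling_bound (q : ℝ) (hq : 1 ≤ q) {n : ℕ} (hn : 4 ≤ n) (τ : Equiv.Perm (Fin n))
    (f : ℝ → ℝ) (δ M : ℝ) (hM : 0 ≤ M) (k : ℕ)
    (hf : ∀ x y, |f x - f y| ≤ δ * (1 + x ^ (2 * k) + y ^ (2 * k)) + M * |x - y|) :
    |En (fun w => f (rhoqBar q (w * τ * w⁻¹))) - En (fun σ : Equiv.Perm (Fin n) => f (rhoqBar q σ))| ≤
      δ * (1 + En (fun w => rhoqBar q (w * τ * w⁻¹) ^ (2 * k)) +
        En (fun σ : Equiv.Perm (Fin n) => rhoqBar q σ ^ (2 * k))) +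
      M * (kap q n * (τ.partition.parts.card + 2 * (harmonic n : ℝ))) := by
  obtain ⟨c0, hc0, hd0⟩ := exists_fullCyc_near τ
  obtain ⟨c, hc, hd⟩ := exists_coupling n
  have hv : ∀ σ, ∃ v, v * c σ * v⁻¹ = c0 := fun σ => isConj_iff.1 (fullCyc_conj (hc σ) hc0)
  choose v hv using hv
  let s : Equiv.Perm (Fin n) → Equiv.Perm (Fin n) := fun σ => v σ * σ * (v σ)⁻¹
  have hrep : ∀ g : Equiv.Perm (Fin n) → ℝ, En g = En (fun σ => En (fun w => g (w * s σ * w⁻¹))) := by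
    intro g
    simp only [s, class_avg]
    rw [En_comm]
    simp only [En_conj, En_const]
  have hD : ∀ σ, (hammingDist ⇑τ ⇑(s σ) : ℝ) ≤ τ.partition.parts.card + hammingDist ⇑(c σ) ⇑σ := by
    intro σ
    have h1 : hammingDist ⇑c0 ⇑(s σ) = hammingDist ⇑(c σ) ⇑σ := by
      rw [← hv σ, ham_mul_right, ham_mul_left]
    have h2 := hammingDist_triangle ⇑τ ⇑c0 ⇑(s σ)
    rw [h1, hammingDist_comm ⇑τ ⇑c0] at h2
    exact_mod_cast h2.trans (Nat.add_le_add_right hd0 _)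
  have hpt : ∀ σ w, |f (rhoqBar q (w * τ * w⁻¹)) - f (rhoqBar q (w * s σ * w⁻¹))| ≤
      δ * ((1 + rhoqBar q (w * τ * w⁻¹) ^ (2 * k)) + rhoqBar q (w * s σ * w⁻¹) ^ (2 * k)) +
      (M * kap q n) * (τ.partition.parts.card + hammingDist ⇑(c σ) ⇑σ) := by
    intro σ w
    refine (hf _ _).trans ?_
    have := bar_ham q hq hn (w * τ * w⁻¹) (w * s σ * w⁻¹)
    rw [ham_mul_right, ham_mul_left] at this
    have h2 := this.trans (mul_le_mul_of_nonneg_right (hD σ) (kap_nonneg q n))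
    have h3 := mul_le_mul_of_nonneg_left h2 hM
    linarith
  have hham : En (fun σ => (hammingDist ⇑(c σ) ⇑σ : ℝ)) ≤ 2 * (harmonic n : ℝ) := by
    unfold En
    rw [div_le_iff₀ (cardPerm_pos n), Fintype.card_perm, Fintype.card_fin, mul_comm (2 * _)]
    exact hd
  rw [hrep (fun σ => f (rhoqBar q σ)), ← En_const (n := n) (En (fun w => f (rhoqBar q (w * τ * w⁻¹)))),
    ← En_sub]
  refine (En_abs_le _).trans ?_
  refine (En_mono (h := fun σ => En (fun w =>
      δ * ((1 + rhoqBar q (w * τ * w⁻¹) ^ (2 * k)) + rhoqBar q (w * s σ * w⁻¹) ^ (2 * k)) +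
      (M * kap q n) * (τ.partition.parts.card + hammingDist ⇑(c σ) ⇑σ))) fun σ => ?_).trans ?_
  · rw [← En_sub]
    refine (En_abs_le _).trans ?_
    exact En_mono fun w => hpt σ w
  · simp only [En_add, En_mul, En_const]
    rw [← hrep (fun σ => rhoqBar q σ ^ (2 * k))]
    have := mul_le_mul_of_nonneg_left hham (mul_nonneg hM (kap_nonneg q n))
    nlinarith

theorem f_bound (f : ℝ → ℝ) (hf : Continuous f) (C : ℝ) (m : ℕ)
    (hC : ∀ x : ℝ, |f x| ≤ C * (1 + |x| ^ m)) (δ : ℝ) (hδ : 0 < δ) :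
    ∃ M : ℝ, 0 ≤ M ∧ ∀ x y, |f x - f y| ≤
      δ * (1 + x ^ (2 * (m + 1)) + y ^ (2 * (m + 1))) + M * |x - y| := by
  have hC0 : 0 ≤ C := by
    have := (abs_nonneg _).trans (hC 1)
    simp at this; linarith
  set R : ℝ := max 1 (4 * C / δ) with hR
  have hR1 : 1 ≤ R := le_max_left _ _
  have hR2 : 4 * C ≤ δ * R := by
    have : 4 * C / δ ≤ R := le_max_right _ _
    rw [div_le_iff₀ hδ] at this; linarith
  have huc := (isCompact_Icc (a := -R) (b := R)).uniformContinuousOn_of_continuous hf.continuousOn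
  rw [Metric.uniformContinuousOn_iff] at huc
  obtain ⟨η, hη, hu⟩ := huc δ hδ
  have hMpos : 0 ≤ C * (2 + 2 * R ^ m) / η := by positivity
  refine ⟨C * (2 + 2 * R ^ m) / η, hMpos, fun x y => ?_⟩
  have hx2 : 0 ≤ x ^ (2 * (m + 1)) := by rw [pow_mul]; positivity
  have hy2 : 0 ≤ y ^ (2 * (m + 1)) := by rw [pow_mul]; positivity
  have hxy0 : 0 ≤ C * (2 + 2 * R ^ m) / η * |x - y| := by positivity
  have htri : |f x - f y| ≤ C * (2 + |x| ^ m + |y| ^ m) := by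
    have := (abs_sub (f x) (f y)).trans (add_le_add (hC x) (hC y))
    linarith
  by_cases hmax : |x| ≤ R ∧ |y| ≤ R
  · by_cases hd : |x - y| < η
    · have := hu x (abs_le.1 hmax.1) y (abs_le.1 hmax.2) hd
      rw [Real.dist_eq] at this
      nlinarith
    · push Not at hd
      have h1 : |x| ^ m ≤ R ^ m := pow_le_pow_left₀ (abs_nonneg _) hmax.1 _
      have h2 : |y| ^ m ≤ R ^ m := pow_le_pow_left₀ (abs_nonneg _) hmax.2 _
      have h3 : C * (2 + 2 * R ^ m) ≤ C * (2 + 2 * R ^ m) / η * |x - y| := by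
        rw [div_mul_eq_mul_div, le_div_iff₀ hη]
        gcongr
      have h4 : C * (2 + |x| ^ m + |y| ^ m) ≤ C * (2 + 2 * R ^ m) := by
        apply mul_le_mul_of_nonneg_left _ hC0; linarith
      have : 0 ≤ δ * (1 + x ^ (2 * (m + 1)) + y ^ (2 * (m + 1))) := by positivity
      linarith
  · set z := max |x| |y| with hz
    have hzR : R < z := by
      by_contra h
      push Not at h
      exact hmax ⟨(le_max_left _ _).trans h, (le_max_right _ _).trans h⟩
    have hz1 : 1 ≤ z := by linarith
    have hzm : 1 ≤ z ^ m := one_le_pow₀ hz1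
    have h1 : |x| ^ m ≤ z ^ m := pow_le_pow_left₀ (abs_nonneg _) (le_max_left _ _) _
    have h2 : |y| ^ m ≤ z ^ m := pow_le_pow_left₀ (abs_nonneg _) (le_max_right _ _) _
    have h3 : C * (2 + |x| ^ m + |y| ^ m) ≤ 4 * C * z ^ m := by
      have : C * (2 + |x| ^ m + |y| ^ m) ≤ C * (4 * z ^ m) := by
        apply mul_le_mul_of_nonneg_left _ hC0; linarith
      linarith
    have h4 : 4 * C * z ^ m ≤ δ * z ^ (2 * (m + 1)) := by
      calc 4 * C * z ^ m ≤ (δ * z) * z ^ m := by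
            apply mul_le_mul_of_nonneg_right _ (by positivity)
            nlinarith
        _ = δ * z ^ (m + 1) := by ring
        _ ≤ δ * z ^ (2 * (m + 1)) := by
            apply mul_le_mul_of_nonneg_left _ hδ.le
            exact pow_le_pow_right₀ hz1 (by omega)
    have h5 : z ^ (2 * (m + 1)) ≤ x ^ (2 * (m + 1)) + y ^ (2 * (m + 1)) := by
      rcases max_choice |x| |y| with h | h
      · rw [hz, h, pow_mul, sq_abs, ← pow_mul]; linarith
      · rw [hz, h, pow_mul, sq_abs, ← pow_mul]; linarith
    nlinarith

noncomputable def en (q ε : ℝ) (n : ℕ) : ℝ := kap q n * ((n : ℝ) ^ ε + 2 * (1 + Real.log n))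

theorem en_tendsto (q ε : ℝ) (hε : ε < 1 / 6) : Tendsto (en q ε) atTop (nhds 0) := by
  have h1 : Tendsto (fun x : ℝ => x ^ (-(1/2 - ε))) atTop (nhds 0) :=
    tendsto_rpow_neg_atTop (by linarith)
  have h2 : Tendsto (fun x : ℝ => x ^ (-(1/2) : ℝ)) atTop (nhds 0) :=
    tendsto_rpow_neg_atTop (by norm_num)
  have h3 : Tendsto (fun x : ℝ => Real.log x / x ^ (1/2 : ℝ)) atTop (nhds 0) :=
    (isLittleO_log_rpow_atTop (by norm_num)).tendsto_div_nhds_zero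
  have h4 := (((h1.add (h2.const_mul 2)).add (h3.const_mul 2)).const_mul ((8 : ℝ) ^ (q + 2))).comp
    tendsto_natCast_atTop_atTop
  simp only [mul_zero, add_zero] at h4
  refine h4.congr' ?_
  filter_upwards [eventually_gt_atTop 0] with n hn
  have hnR : (0 : ℝ) < n := by exact_mod_cast hn
  simp only [Function.comp, en, kap]
  have e1 : (n : ℝ) ^ (-(1/2 - ε)) = (n : ℝ) ^ (-(1/2) : ℝ) * (n : ℝ) ^ ε := by
    rw [← Real.rpow_add hnR]; congr 1; ring
  have e2 : (n : ℝ) ^ (-(1/2) : ℝ) = ((n : ℝ) ^ (1/2 : ℝ))⁻¹ := Real.rpow_neg hnR.le _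
  rw [e1, e2]
  ring

theorem cond_bound (q : ℝ) (hq : 1 ≤ q) (ε : ℝ) {n : ℕ} (hn : 4 ≤ n)
    (lam : (Fintype.card (Fin n)).Partition) (hlam : (lam.parts.card : ℝ) ≤ (n : ℝ) ^ ε)
    (f : ℝ → ℝ) (δ M : ℝ) (hδ : 0 ≤ δ) (hM : 0 ≤ M) (k : ℕ)
    (hf : ∀ x y, |f x - f y| ≤ δ * (1 + x ^ (2 * k) + y ^ (2 * k)) + M * |x - y|)
    (hen : en q ε n ≤ 1) :
    |EnCond lam (fun σ => f (rhoqBar q σ)) - En (n := n) (fun σ => f (rhoqBar q σ))| ≤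
      δ * (1 + 2 ^ (2 * k - 1) * (Ck q k + 1) + Ck q k) + M * en q ε n := by
  obtain ⟨τ, rfl⟩ := exists_perm_partition lam
  rw [EnCond_eq]
  have hd : kap q n * (τ.partition.parts.card + 2 * (harmonic n : ℝ)) ≤ en q ε n := by
    unfold en
    have := harmonic_le_one_add_log n
    exact mul_le_mul_of_nonneg_left (by linarith) (kap_nonneg q n)
  have hmean : |En (fun w => rhoqBar q (w * τ * w⁻¹))| ≤ 1 := by
    have := coupling_bound q hq hn τ id 0 1 zero_le_one 0 (by intro x y; simp)
    simp only [id] at this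
    rw [En_bar] at this
    simp only [sub_zero, zero_mul, zero_add, one_mul] at this
    exact this.trans (hd.trans hen)
  have hmom : En (fun w => rhoqBar q (w * τ * w⁻¹) ^ (2 * k)) ≤ 2 ^ (2 * k - 1) * (Ck q k + 1) := by
    set μ := En (fun w => rhoqBar q (w * τ * w⁻¹)) with hμ
    have hp : ∀ w, rhoqBar q (w * τ * w⁻¹) ^ (2 * k) ≤
        2 ^ (2 * k - 1) * ((rhoqBar q (w * τ * w⁻¹) - μ) ^ (2 * k) + μ ^ (2 * k)) := by
      intro w
      have := (even_two_mul k).add_pow_le (a := rhoqBar q (w * τ * w⁻¹) - μ) (b := μ)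
      simpa using this
    refine (En_mono hp).trans ?_
    rw [En_mul, En_add, En_const]
    have h1 := moment_conj q hq hn k τ
    rw [← hμ] at h1
    have h2 : μ ^ (2 * k) ≤ 1 := by
      rw [← (even_two_mul k).pow_abs]
      exact pow_le_one₀ (abs_nonneg _) hmean
    gcongr
  refine (coupling_bound q hq hn τ f δ M hM k hf).trans ?_
  have hu := moment_unif q hq hn k
  gcongr

end Fin

/-- For `1 ≤ q < ∞`, `0 < ε < 1/6` and partitions `λ^n ⊢ n` with at most `n^ε` parts,
the conditional expectation of `f(ρ̄_q)` given cycle type `λ^n` converges to the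
unconditional expectation, for every continuous `f` of polynomial growth. -/
theorem condExp_rhoqBar_given_cycleType_tendsto (q : ℝ) (hq : 1 ≤ q)
    (ε : ℝ) (hε0 : 0 < ε) (hε : ε < 1 / 6)
    (lam : ∀ n : ℕ, (Fintype.card (Fin n)).Partition)
    (hlam : ∀ n : ℕ, ((lam n).parts.card : ℝ) ≤ (n : ℝ) ^ ε)
    (f : ℝ → ℝ) (hf : Continuous f)
    (hpoly : ∃ C : ℝ, ∃ m : ℕ, ∀ x : ℝ, |f x| ≤ C * (1 + |x| ^ m)) :
    Tendsto (fun n : ℕ =>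
        EnCond (lam n) (fun σ => f (rhoqBar q σ)) -
          En (n := n) (fun σ => f (rhoqBar q σ)))
      atTop (nhds 0) := by
  obtain ⟨C, m, hC⟩ := hpoly
  rw [Metric.tendsto_nhds]
  intro η hη
  set B : ℝ := 1 + 2 ^ (2 * (m + 1) - 1) * (Ck q (m + 1) + 1) + Ck q (m + 1) with hB
  have hCk : 0 ≤ Ck q (m + 1) := by unfold Ck; positivity
  have hB0 : 0 < B := by positivity
  obtain ⟨M, hM, hfM⟩ := f_bound f hf C m hC (η / (2 * B)) (by positivity)
  have h1 := (en_tendsto q ε hε).eventually (gt_mem_nhds (zero_lt_one (α := ℝ)))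
  have h2' : Tendsto (fun n => M * en q ε n) atTop (nhds 0) := by
    simpa using (en_tendsto q ε hε).const_mul M
  have h2 := h2'.eventually (gt_mem_nhds (half_pos hη))
  filter_upwards [eventually_ge_atTop 4, h1, h2] with n hn h1 h2
  have := cond_bound q hq ε hn (lam n) (hlam n) f (η / (2 * B)) M (by positivity) hM (m + 1) hfM h1.le
  rw [← hB] at this
  have e : η / (2 * B) * B = η / 2 := by field_simp
  rw [e] at this
  rw [Real.dist_eq, sub_zero]
  linarith
end
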